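/- Let (Ω, Σ, μ) be a finite nonatomic measure space. Then the Fréchet–Nikodym metric space X of equivalence classes of measurable sets (A ~ B iff μ(A Δ B) = 0) with metric d(A,B) = μ(A Δ B) is connected. -/

import Mathlib

open MeasureTheory

/-!
It suffices that a clopen family `s` of measurable sets containing `∅` contains every set `A` of
finite measure. As `s` is closed, the members of `s` inside `A` are stable under increasing
countable unions, so one of them, `C`, has maximal measure among the members of `s` between `C` and
`A`. If `A \ C` were not null, then, atoms being absent, it would contain a set of positive measure
so small that adding it to `C` does not leave the open family `s`, against maximality. Hence `C` is
at distance zero from `A`, and `A` is in `s`.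
-/

open Filter Set Topology
open scoped ENNReal symmDiff

-- The Brezis–Browder ordering principle.
theorem exists_le_forall_le_eq_of_monotone {α : Type*} [Preorder α] {f : α → ℝ}
    (hf : Monotone f) (hbdd : BddAbove (range f))
    (hseq : ∀ u : ℕ → α, Monotone u → BddAbove (range u)) (a : α) :
    ∃ b, a ≤ b ∧ ∀ c, b ≤ c → f c = f b := by
  have almost_max (n : ℕ) (x : α) : ∃ y, x ≤ y ∧ ∀ z, x ≤ z → f z < f y + 1 / (n + 1) := by
    obtain ⟨_, ⟨y, hxy, rfl⟩, hy⟩ := exists_lt_of_lt_csSup (nonempty_Ici.image f)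
      (sub_lt_self (sSup (f '' Ici x)) (Nat.one_div_pos_of_nat (n := n)))
    refine ⟨y, hxy, fun z hxz ↦ (le_csSup ?_ (mem_image_of_mem f hxz)).trans_lt
      (sub_lt_iff_lt_add.1 hy)⟩
    exact hbdd.mono (image_subset_range f _)
  choose next le_next lt_next using almost_max
  let u : ℕ → α := fun n ↦ Nat.rec a next n
  obtain ⟨b, hb⟩ := hseq u (monotone_nat_of_le_succ fun n ↦ le_next n (u n))
  have hub (n : ℕ) : u n ≤ b := hb (mem_range_self n)
  refine ⟨b, hub 0, fun c hbc ↦ (le_of_forall_pos_lt_add fun ε hε ↦ ?_).antisymm (hf hbc)⟩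
  obtain ⟨n, hn⟩ := exists_nat_one_div_lt hε
  calc f c < f (u (n + 1)) + 1 / (n + 1) := lt_next n (u n) c ((hub n).trans hbc)
    _ ≤ f b + ε := add_le_add (hf (hub (n + 1))) hn.le

section

variable {Ω : Type*} [MeasurableSpace Ω]

/-- `μ` has no atoms of finite measure: every measurable set of positive finite measure has a
measurable subset of strictly intermediate measure. Mathlib's `NullSingletonClass` is not this
notion: it only asks singletons to be null. -/
def NoFiniteAtoms (μ : Measure Ω) : Prop :=
  ∀ A : Set Ω, MeasurableSet A → 0 < μ A → μ A ≠ ∞ →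
    ∃ B ⊆ A, MeasurableSet B ∧ 0 < μ B ∧ μ B < μ A

variable {μ : Measure Ω}

namespace NoFiniteAtoms

theorem exists_subset_measure_le_half (hμ : NoFiniteAtoms μ) {A : Set Ω} (hA : MeasurableSet A)
    (hpos : 0 < μ A) (hfin : μ A ≠ ∞) :
    ∃ B ⊆ A, MeasurableSet B ∧ 0 < μ B ∧ μ B ≤ μ A / 2 := by
  obtain ⟨B, hBA, hB, hBpos, hBlt⟩ := hμ A hA hpos hfin
  by_cases hle : μ B ≤ μ A / 2
  · exact ⟨B, hBA, hB, hBpos, hle⟩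
  · have hdiff : μ (A \ B) = μ A - μ B := measure_sdiff hBA hB.nullMeasurableSet hBlt.ne_top
    refine ⟨A \ B, sdiff_subset, hA.diff hB, hdiff ▸ tsub_pos_of_lt hBlt, ?_⟩
    calc μ (A \ B) = μ A - μ B := hdiff
      _ ≤ μ A - μ A / 2 := tsub_le_tsub_left (not_le.1 hle).le _
      _ = μ A / 2 := ENNReal.sub_half hfin

theorem exists_subset_measure_lt (hμ : NoFiniteAtoms μ) {A : Set Ω} (hA : MeasurableSet A)
    (hpos : 0 < μ A) (hfin : μ A ≠ ∞) {ε : ℝ≥0∞} (hε : 0 < ε) :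
    ∃ B ⊆ A, MeasurableSet B ∧ 0 < μ B ∧ μ B < ε := by
  have halving (n : ℕ) : ∃ B ⊆ A, MeasurableSet B ∧ 0 < μ B ∧ μ B ≤ 2⁻¹ ^ n * μ A := by
    induction n with
    | zero => exact ⟨A, subset_rfl, hA, hpos, by simp⟩
    | succ n ih =>
      obtain ⟨B, hBA, hB, hBpos, hBle⟩ := ih
      obtain ⟨C, hCB, hC, hCpos, hCle⟩ :=
        hμ.exists_subset_measure_le_half hB hBpos (measure_ne_top_of_subset hBA hfin)
      refine ⟨C, hCB.trans hBA, hC, hCpos, ?_⟩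
      calc μ C ≤ 2⁻¹ * μ B := by rwa [mul_comm, ← div_eq_mul_inv]
        _ ≤ 2⁻¹ * (2⁻¹ ^ n * μ A) := by gcongr
        _ = 2⁻¹ ^ (n + 1) * μ A := by rw [pow_succ', mul_assoc]
  obtain ⟨n, hn⟩ := ENNReal.exists_inv_two_pow_lt (ENNReal.div_pos hε.ne' hfin).ne'
  obtain ⟨B, hBA, hB, hBpos, hBle⟩ := halving n
  exact ⟨B, hBA, hB, hBpos, hBle.trans_lt (ENNReal.mul_lt_of_lt_div hn)⟩

end NoFiniteAtoms

theorem edist_measuredSets_of_subset {A B : MeasuredSets μ} (hAB : (A : Set Ω) ⊆ B) :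
    edist A B = μ (B \ A : Set Ω) := by
  rw [MeasuredSets.edist_def, symmDiff_of_le hAB]

theorem tendsto_measuredSets_iUnion_of_monotone {ι : Type*} [Preorder ι]
    [(atTop : Filter ι).IsCountablyGenerated] {u : ι → MeasuredSets μ}
    (hu : Monotone fun i ↦ (u i : Set Ω)) {A : MeasuredSets μ}
    (hA : (A : Set Ω) = ⋃ i, (u i : Set Ω)) (hfin : μ A ≠ ∞) :
    Tendsto u atTop (𝓝 A) := by
  have hsub (i : ι) : (u i : Set Ω) ⊆ A := hA ▸ subset_iUnion (fun i ↦ (u i : Set Ω)) i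
  have hedist (i : ι) : edist (u i) A = μ A - μ (u i) := by
    rw [edist_measuredSets_of_subset (hsub i), measure_sdiff (hsub i) (u i).2.nullMeasurableSet
      (measure_ne_top_of_subset (hsub i) hfin)]
  have hlim : Tendsto (fun i ↦ μ (u i)) atTop (𝓝 (μ A)) :=
    hA ▸ tendsto_measure_iUnion_atTop hu
  rw [tendsto_iff_edist_tendsto_0]
  simpa only [hedist, tsub_self] using
    ENNReal.Tendsto.sub tendsto_const_nhds hlim (Or.inl hfin)

theorem exists_measure_maximal_of_isClosed {s : Set (MeasuredSets μ)} (hs : IsClosed s)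
    {A B : MeasuredSets μ} (hA : μ A ≠ ∞) (hB : B ∈ s) (hBA : (B : Set Ω) ⊆ A) :
    ∃ C ∈ s, (C : Set Ω) ⊆ A ∧
      ∀ D ∈ s, (C : Set Ω) ⊆ D → (D : Set Ω) ⊆ A → μ D = μ C := by
  let 𝒞 := {C : MeasuredSets μ // C ∈ s ∧ (C : Set Ω) ⊆ A}
  let _ : Preorder 𝒞 := Preorder.lift fun C ↦ (C.1 : Set Ω)
  have hfin (C : 𝒞) : μ C.1 ≠ ∞ := measure_ne_top_of_subset C.2.2 hA
  have hmono : Monotone fun C : 𝒞 ↦ μ.real C.1 := fun C D hCD ↦ measureReal_mono hCD (hfin D)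
  have hbdd : BddAbove (range fun C : 𝒞 ↦ μ.real C.1) :=
    ⟨μ.real A, forall_mem_range.2 fun C ↦ measureReal_mono C.2.2 hA⟩
  have hseq (u : ℕ → 𝒞) (hu : Monotone u) : BddAbove (range u) := by
    let U : MeasuredSets μ := ⟨⋃ n, (u n).1, .iUnion fun n ↦ (u n).1.2⟩
    have hUA : (U : Set Ω) ⊆ A := iUnion_subset fun n ↦ (u n).2.2
    have hlim : Tendsto (fun n ↦ (u n).1) atTop (𝓝 U) :=
      tendsto_measuredSets_iUnion_of_monotone hu rfl (measure_ne_top_of_subset hUA hA)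
    refine ⟨⟨U, hs.mem_of_tendsto hlim (.of_forall fun n ↦ (u n).2.1), hUA⟩, ?_⟩
    exact forall_mem_range.2 fun n ↦ subset_iUnion (fun n ↦ ((u n).1 : Set Ω)) n
  obtain ⟨⟨C, hC, hCA⟩, -, hmax⟩ :=
    exists_le_forall_le_eq_of_monotone hmono hbdd hseq ⟨B, hB, hBA⟩
  refine ⟨C, hC, hCA, fun D hD hCD hDA ↦ ?_⟩
  exact (measureReal_eq_measureReal_iff (hfin ⟨D, hD, hDA⟩) (hfin ⟨C, hC, hCA⟩)).1
    (hmax ⟨D, hD, hDA⟩ hCD)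

theorem NoFiniteAtoms.exists_measure_lt_of_isOpen (hμ : NoFiniteAtoms μ)
    {s : Set (MeasuredSets μ)} (hs : IsOpen s) {A C : MeasuredSets μ} (hA : μ A ≠ ∞)
    (hC : C ∈ s) (hCA : (C : Set Ω) ⊆ A) (hpos : 0 < μ (A \ C : Set Ω)) :
    ∃ D ∈ s, (C : Set Ω) ⊆ D ∧ (D : Set Ω) ⊆ A ∧ μ C < μ D := by
  obtain ⟨ε, hε, hball⟩ := EMetric.mem_nhds_iff.1 (hs.mem_nhds hC)
  obtain ⟨E, hEsub, hE, hEpos, hElt⟩ := hμ.exists_subset_measure_lt (A.2.diff C.2) hpos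
    (measure_ne_top_of_subset sdiff_subset hA) hε
  have hCE : Disjoint (C : Set Ω) E := disjoint_sdiff_right.mono_right hEsub
  let D : MeasuredSets μ := ⟨C ∪ E, C.2.union hE⟩
  have hCD : (C : Set Ω) ⊆ D := subset_union_left
  refine ⟨D, hball ?_, hCD, union_subset hCA (hEsub.trans sdiff_subset), ?_⟩
  · calc edist D C = μ (D \ C : Set Ω) := by rw [edist_comm, edist_measuredSets_of_subset hCD]
      _ = μ E := congrArg μ hCE.sup_sdiff_cancel_left
      _ < ε := hElt
  · calc μ C < μ C + μ E := ENNReal.lt_add_right (measure_ne_top_of_subset hCA hA) hEpos.ne'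
      _ = μ D := (measure_union hCE hE).symm

theorem NoFiniteAtoms.mem_of_isClopen (hμ : NoFiniteAtoms μ) {s : Set (MeasuredSets μ)}
    (hs : IsClopen s) {A B : MeasuredSets μ} (hA : μ A ≠ ∞) (hB : B ∈ s)
    (hBA : (B : Set Ω) ⊆ A) : A ∈ s := by
  obtain ⟨C, hC, hCA, hmax⟩ := exists_measure_maximal_of_isClosed hs.isClosed hA hB hBA
  have hnull : μ (A \ C : Set Ω) = 0 := by
    by_contra hne
    obtain ⟨D, hD, hCD, hDA, hlt⟩ :=
      hμ.exists_measure_lt_of_isOpen hs.isOpen hA hC hCA (pos_iff_ne_zero.2 hne)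
    exact hlt.ne' (hmax D hD hCD hDA)
  have hinsep : Inseparable C A :=
    EMetric.inseparable_iff.2 ((edist_measuredSets_of_subset hCA).trans hnull)
  exact (hinsep.mem_open_iff hs.isOpen).1 hC

theorem isClopen_setOf_measure_ne_top : IsClopen {A : MeasuredSets μ | μ A ≠ ∞} := by
  let O : MeasuredSets μ := ⟨∅, .empty⟩
  have hball : {A : MeasuredSets μ | μ A ≠ ∞} = Metric.eball O ∞ := by
    ext A
    have hOA : edist A O = μ A := by
      rw [edist_comm, edist_measuredSets_of_subset (empty_subset _)]
      exact congrArg μ sdiff_empty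
    rw [Metric.mem_eball, hOA, lt_top_iff_ne_top, mem_ofPred_eq]
  exact hball ▸ ⟨Metric.isClosed_eball_top, Metric.isOpen_eball⟩

theorem NoFiniteAtoms.isConnected_setOf_measure_ne_top (hμ : NoFiniteAtoms μ) :
    IsConnected {A : MeasuredSets μ | μ A ≠ ∞} := by
  set F := {A : MeasuredSets μ | μ A ≠ ∞}
  have hF : IsClopen F := isClopen_setOf_measure_ne_top
  let O : F := ⟨⟨∅, .empty⟩, (measure_empty (μ := μ)).trans_ne ENNReal.zero_ne_top⟩
  have eq_univ {s : Set F} (hs : IsClopen s) (hO : O ∈ s) : s = univ := by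
    refine eq_univ_of_forall fun A ↦ ?_
    have himage : IsClopen (Subtype.val '' s) :=
      ⟨hF.isClosed.isClosedMap_subtype_val s hs.isClosed,
        hF.isOpen.isOpenMap_subtype_val s hs.isOpen⟩
    exact Subtype.val_injective.mem_set_image.1
      (hμ.mem_of_isClopen himage A.2 (mem_image_of_mem _ hO) (empty_subset _))
  refine ⟨⟨O, O.2⟩, isPreconnected_iff_preconnectedSpace.2 (preconnectedSpace_iff_clopen.2 ?_)⟩
  intro s hs
  by_cases hO : O ∈ s
  · exact .inr (eq_univ hs hO)
  · exact .inl (compl_univ_iff.1 (eq_univ hs.compl hO))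

theorem continuous_indicatorConstLp_measuredSets {E : Type*} [NormedAddCommGroup E] {p : ℝ≥0∞}
    [Fact (1 ≤ p)] (hp : p ≠ ∞) (c : E) :
    Continuous fun A : {A : MeasuredSets μ | μ A ≠ ∞} ↦ indicatorConstLp p A.1.2 A.2 c :=
  continuous_indicatorConstLp_set hp fun _ ↦
    tendsto_iff_edist_tendsto_0.1 continuous_subtype_val.continuousAt

end

theorem stmt9_general {Ω E : Type*} [MeasurableSpace Ω] [NormedAddCommGroup E] {μ : Measure Ω}
    (hμ : NoFiniteAtoms μ) {p : ℝ≥0∞} [Fact (1 ≤ p)] (hp : p ≠ ∞) (c : E) :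
    IsConnected {f : Lp E p μ | ∃ (A : Set Ω) (hA : MeasurableSet A) (hfin : μ A ≠ ∞),
      f = indicatorConstLp p hA hfin c} := by
  have : ConnectedSpace {A : MeasuredSets μ | μ A ≠ ∞} :=
    isConnected_iff_connectedSpace.1 hμ.isConnected_setOf_measure_ne_top
  convert isConnected_range (continuous_indicatorConstLp_measuredSets (μ := μ) hp c)
  ext f
  constructor
  · rintro ⟨A, hA, hfin, rfl⟩
    exact ⟨⟨⟨A, hA⟩, hfin⟩, rfl⟩
  · rintro ⟨A, rfl⟩
    exact ⟨A.1, A.1.2, A.2, rfl⟩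

/-- For a finite nonatomic measure space, the Fréchet–Nikodym
space (realized as the set of indicator functions inside `L¹(μ)`) is connected. -/
theorem stmt9 {Ω : Type*} [MeasurableSpace Ω] (μ : Measure Ω) [IsFiniteMeasure μ]
    (hna : ∀ A : Set Ω, MeasurableSet A → 0 < μ A →
      ∃ B ⊆ A, MeasurableSet B ∧ 0 < μ B ∧ μ B < μ A) :
    IsConnected {f : Lp ℝ 1 μ |
      ∃ (A : Set Ω) (hA : MeasurableSet A),
        f = indicatorConstLp 1 hA (measure_ne_top μ A) (1 : ℝ)} := by
  have hμ : NoFiniteAtoms μ := fun A hA hpos _ ↦ hna A hA hpos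
  simpa only [exists_prop_of_true (measure_ne_top μ _)] using
    stmt9_general hμ ENNReal.one_ne_top (1 : ℝ)
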